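/- arXiv:0906.2437 — 3 statements merged into one kernel-verified Lean document; each statement's English description precedes it below -/
import Mathlib

section
/- Let k be a field of characteristic different from 2, let n ≥ 6 be even, and let M be a perfect matching on {1,…,n}. Then the full antisymmetrization of the cube of the graph monomial of M vanishes identically: ∑_{σ ∈ S_n} sgn(σ) · σ(m_M³) = 0 in A, where S_n acts on A by permuting the variable pairs. (For n = 6 this antisymmetrized cube is the pullback of the Segre cubic relation, and for n = 8 it is the pullback of the unique skew-invariant cubic, which therefore lies in the ideal of the GIT quotient of (ℙ¹)⁸.) -/
/-!
The cube of the graph monomial of a perfect matching has degree `3` in each pair `(x_i, y_i)`, so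
each of its monomials is `∏ x_i ^ a_i * y_i ^ (3 - a_i)` with `0 ≤ a_i ≤ 3`. As `n > 4`, two of the
exponents `a_i`, `a_j` agree; the monomial is then fixed by the transposition `(i j)`, and its
antisymmetrization vanishes because the terms of `σ` and `σ * (i j)` cancel. (Conceptually:
the antisymmetrization lives in the `n`-th exterior power of the four-dimensional space of binary
cubics.) The cancellation is `antisymm_monomial`, the degree count `graphMonomial_homogeneous`.
-/

open MvPolynomial

/-- The polynomial ring `A = k[x_1, y_1, …, x_n, y_n]`: variable `(i, 0)` is `x_i`
and `(i, 1)` is `y_i`. -/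
abbrev PtRing (k : Type) [CommRing k] (n : ℕ) := MvPolynomial (Fin n × Fin 2) k

/-- The bracket `[ab] = x_a y_b − x_b y_a`. -/
noncomputable def bracket (k : Type) [CommRing k] (n : ℕ) (a b : Fin n) : PtRing k n :=
  X (a, 0) * X (b, 1) - X (b, 0) * X (a, 1)

/-- The graph monomial `m_Γ = ∏_{(a,b) ∈ Γ} [ab]` of a directed graph `Γ`,
viewed as a multiset of directed edges. -/
noncomputable def graphMonomial (k : Type) [CommRing k] (n : ℕ)
    (Γ : Multiset (Fin n × Fin n)) : PtRing k n :=
  (Γ.map fun e => bracket k n e.1 e.2).prod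

/-- The `k`-algebra endomorphism of `A` induced by a `2×2` matrix `g = ((p,q),(r,s))`:
`x_i ↦ p·x_i + r·y_i` and `y_i ↦ q·x_i + s·y_i`. -/
noncomputable def subst (k : Type) [CommRing k] (n : ℕ) (g : Matrix (Fin 2) (Fin 2) k) :
    PtRing k n →ₐ[k] PtRing k n :=
  aeval fun p =>
    if p.2 = 0 then C (g 0 0) * X (p.1, 0) + C (g 1 0) * X (p.1, 1)
    else C (g 0 1) * X (p.1, 0) + C (g 1 1) * X (p.1, 1)

/-- The valence vector of a directed graph: the `i`-th entry is the number of edges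
(with multiplicity) having `i` as an endpoint. -/
def valence (n : ℕ) (Γ : Multiset (Fin n × Fin n)) : Fin n → ℕ :=
  fun i => (Γ.map Prod.fst).count i + (Γ.map Prod.snd).count i

/-- `R_v`: the space of `SL₂(k)`-invariant multihomogeneous polynomials of multidegree `v`. -/
noncomputable def Rv (k : Type) [CommRing k] (n : ℕ) (v : Fin n → ℕ) :
    Submodule k (PtRing k n) :=
  (⨅ g : Matrix.SpecialLinearGroup (Fin 2) k,
      LinearMap.ker ((subst k n (g : Matrix (Fin 2) (Fin 2) k)).toLinearMap
        - (LinearMap.id : PtRing k n →ₗ[k] PtRing k n))) ⊓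
  weightedHomogeneousSubmodule k (fun p : Fin n × Fin 2 => Finsupp.single p.1 1)
    (Finsupp.equivFunOnFinite.symm v)

/-- The action of a permutation `σ ∈ S_n` on `A`, permuting the variable pairs:
`x_i ↦ x_{σ(i)}`, `y_i ↦ y_{σ(i)}`. -/
noncomputable def permAction (k : Type) [CommRing k] (n : ℕ) (σ : Equiv.Perm (Fin n)) :
    PtRing k n →ₐ[k] PtRing k n :=
  aeval fun p => X (σ p.1, p.2)

/-- A perfect matching on `{1,…,n}`: every vertex lies on exactly one edge and every edge
`(a,b)` satisfies `a < b`. -/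
def IsPerfectMatching (n : ℕ) (Γ : Multiset (Fin n × Fin n)) : Prop :=
  (∀ e ∈ Γ, e.1 < e.2) ∧
  ∀ i : Fin n, (Γ.map Prod.fst).count i + (Γ.map Prod.snd).count i = 1

/-- The weight giving the two variables `x_i`, `y_i` degree `1` and all others degree `0`. -/
def pairWeight (n : ℕ) (i : Fin n) : Fin n × Fin 2 → ℕ := fun p => if p.1 = i then 1 else 0

lemma weight_pairWeight (n : ℕ) (i : Fin n) (d : Fin n × Fin 2 →₀ ℕ) :
    Finsupp.weight (pairWeight n i) d = d (i, 0) + d (i, 1) := by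
  rw [Finsupp.weight_apply, Finsupp.sum_fintype _ _ (by simp), Fintype.sum_prod_type]
  simp [pairWeight]

lemma bracket_homogeneous (k : Type) [CommRing k] (n : ℕ) (i a b : Fin n) :
    IsWeightedHomogeneous (pairWeight n i) (bracket k n a b)
      ((if a = i then 1 else 0) + (if b = i then 1 else 0)) := by
  have hX := fun p : Fin n × Fin 2 => isWeightedHomogeneous_X k (pairWeight n i) p
  have h1 := (hX (a, 0)).mul (hX (b, 1))
  have h2 := (hX (b, 0)).mul (hX (a, 1))
  rw [add_comm] at h2
  exact Submodule.sub_mem (weightedHomogeneousSubmodule k (pairWeight n i) _) h1 h2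

lemma graphMonomial_homogeneous (k : Type) [CommRing k] (n : ℕ) (i : Fin n)
    (Γ : Multiset (Fin n × Fin n)) :
    IsWeightedHomogeneous (pairWeight n i) (graphMonomial k n Γ) (valence n Γ i) := by
  induction Γ using Multiset.induction_on with
  | empty => simpa [graphMonomial, valence] using isWeightedHomogeneous_one k (pairWeight n i)
  | cons e Γ ih =>
    have h := (bracket_homogeneous k n i e.1 e.2).mul ih
    have hv : valence n (e ::ₘ Γ) i
        = ((if e.1 = i then 1 else 0) + (if e.2 = i then 1 else 0)) + valence n Γ i := by
      simp only [valence, Multiset.map_cons, Multiset.count_cons, eq_comm (a := i)]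
      ring
    rw [hv]
    simpa [graphMonomial] using h

lemma permAction_monomial (k : Type) [CommRing k] (n : ℕ) (σ : Equiv.Perm (Fin n))
    (d : Fin n × Fin 2 →₀ ℕ) (c : k) :
    permAction k n σ (monomial d c)
      = C c * ∏ i : Fin n, (X (σ i, 0) ^ d (i, 0) * X (σ i, 1) ^ d (i, 1)) := by
  rw [permAction, aeval_monomial, Finsupp.prod_fintype _ _ (by simp), Fintype.prod_prod_type]
  simp [algebraMap_eq]

lemma permAction_monomial_swap (k : Type) [CommRing k] (n : ℕ) (σ : Equiv.Perm (Fin n))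
    (d : Fin n × Fin 2 →₀ ℕ) (c : k) (i j : Fin n)
    (h0 : d (i, 0) = d (j, 0)) (h1 : d (i, 1) = d (j, 1)) :
    permAction k n (σ * Equiv.swap i j) (monomial d c) = permAction k n σ (monomial d c) := by
  rw [permAction_monomial, permAction_monomial]
  congr 1
  refine Fintype.prod_equiv (Equiv.swap i j) _ _ fun l => ?_
  have h (ε : Fin 2) (hε : d (i, ε) = d (j, ε)) : d (Equiv.swap i j l, ε) = d (l, ε) := by
    rw [Equiv.swap_apply_def]
    split_ifs with hi hj <;> simp_all
  rw [h 0 h0, h 1 h1]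
  simp

/-- The terms of `σ` and `σ * (i j)` cancel in pairs. -/
lemma antisymm_monomial (k : Type) [CommRing k] (n : ℕ) (d : Fin n × Fin 2 →₀ ℕ) (c : k)
    (i j : Fin n) (hij : i ≠ j) (h0 : d (i, 0) = d (j, 0)) (h1 : d (i, 1) = d (j, 1)) :
    ∑ σ : Equiv.Perm (Fin n),
      (Equiv.Perm.sign σ : ℤ) • permAction k n σ (monomial d c) = 0 := by
  refine Finset.sum_involution (fun σ _ => σ * Equiv.swap i j) ?_ ?_ ?_ ?_
  · intro σ _
    rw [permAction_monomial_swap k n σ d c i j h0 h1]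
    simp [Equiv.Perm.sign_swap hij]
  · intro σ _ _ h
    exact hij (Equiv.swap_eq_one_iff.mp (mul_eq_left.mp h))
  · intro σ _
    exact Finset.mem_univ _
  · intro σ _
    simp [mul_assoc]

/-- For even `n ≥ 6` and a perfect matching `M`, the full antisymmetrization of the cube of
the graph monomial of `M` vanishes identically. -/
theorem stmt9 (k : Type) [Field k] (hchar : ringChar k ≠ 2) (n : ℕ) (hn : 6 ≤ n)
    (hne : Even n) (M : Multiset (Fin n × Fin n)) (hM : IsPerfectMatching n M) :
    ∑ σ : Equiv.Perm (Fin n),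
      (Equiv.Perm.sign σ : ℤ) • permAction k n σ (graphMonomial k n M ^ 3) = 0 := by
  have hdeg (d : Fin n × Fin 2 →₀ ℕ) (hd : d ∈ (graphMonomial k n M ^ 3).support)
      (i : Fin n) : d (i, 0) + d (i, 1) = 3 := by
    have hv : valence n M i = 1 := hM.2 i
    have h := (graphMonomial_homogeneous k n i M).pow 3 (mem_support_iff.mp hd)
    rw [weight_pairWeight, hv] at h
    simpa using h
  rw [(graphMonomial k n M ^ 3).as_sum]
  simp only [map_sum, Finset.smul_sum]
  rw [Finset.sum_comm]
  refine Finset.sum_eq_zero fun d hd => ?_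
  -- The `n > 4` exponents of the `x_i` all lie in `{0, 1, 2, 3}`.
  obtain ⟨i, j, hij, h⟩ := Fintype.exists_ne_map_eq_of_card_lt
    (fun i : Fin n => (⟨d (i, 0), by have := hdeg d hd i; omega⟩ : Fin 4)) (by simp; omega)
  have h0 : d (i, 0) = d (j, 0) := by simpa using h
  have hi := hdeg d hd i
  have hj := hdeg d hd j
  exact antisymm_monomial k n d _ i j hij h0 (by omega)
end

section
/- Let k be a field of characteristic 0 and n = 6. The k-vector space R_{(1,1,1,1,1,1)} of SL₂(k)-invariant multihomogeneous polynomials of multidegree (1,1,1,1,1,1) has dimension 5. (This is the degree 1 piece of the graded ring whose Proj is the Segre cubic threefold in ℙ⁴.) -/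
/-! An invariant `f` of multidegree `(1,…,1)` is multilinear in the six vectors `(x_i, y_i)`, so it is
determined by the 64 coefficients `c_S` of `∏_{i ∈ S} x_i ∏_{i ∉ S} y_i`, which are also the values of
`f` at the points whose `i`-th vector is `(1,0)` for `i ∈ S` and `(0,1)` for `i ∉ S`
(`eval_eq_sum`). Invariance under `diag(2, 1/2)` forces `c_S = 0` unless `|S| = 3`
(`coef_eq_zero_of_card`), and invariance under `x ↦ x + y` then gives, for every pair `T`, the relation
`∑_{S ⊇ T, |S| = 3} c_S = 0` (`sum_pair`). These 15 relations in 20 unknowns determine every `c_S` from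
the five with `S = 012, 013, 014, 023, 024` (`all_zero`). Hence taking these five coefficients is an
injective linear map `R_{(1,…,1)} → k⁵`.

It is also surjective: the sets listed are the sets of opening points of the five noncrossing perfect
matchings of six points on a circle, and with respect to them the graph monomials of these matchings
have a unitriangular coefficient matrix. -/

open MvPolynomial

variable {k : Type} [Field k]

/-- The point of `(k²)⁶` whose `i`-th vector is `(1,0)` for `i ∈ S` and `(0,1)` for `i ∉ S`. -/
def pt (k : Type) [Field k] (S : Finset (Fin 6)) : Fin 6 × Fin 2 → k :=
  fun p => if (p.2 = 0 ↔ p.1 ∈ S) then 1 else 0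

/-- The point with coordinates `p·x_i + r·y_i`, `q·x_i + s·y_i`, where `P = (x_i, y_i)` and
`g = ((p,q),(r,s))`. -/
def act (g : Matrix (Fin 2) (Fin 2) k) (P : Fin 6 × Fin 2 → k) : Fin 6 × Fin 2 → k :=
  fun p => if p.2 = 0 then g 0 0 * P (p.1, 0) + g 1 0 * P (p.1, 1)
    else g 0 1 * P (p.1, 0) + g 1 1 * P (p.1, 1)

/-- Substituting by `g` amounts to letting `g` act on the points of evaluation. -/
theorem eval_subst (g : Matrix (Fin 2) (Fin 2) k) (P : Fin 6 × Fin 2 → k) (f : PtRing k 6) :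
    eval P (subst k 6 g f) = eval (act g P) f := by
  induction f using MvPolynomial.induction_on with
  | C a => simp [subst]
  | add p q hp hq => simp only [map_add, hp, hq]
  | mul_X p i hp =>
    rw [map_mul, map_mul, hp, map_mul]
    congr 1
    simp only [subst, act, aeval_X, eval_X]
    split_ifs <;> simp

/-- A monomial of multidegree `(1,…,1)` picks exactly one of `x_i`, `y_i` for each `i`. -/
theorem eval_monomial_eq (d : Fin 6 × Fin 2 →₀ ℕ) (hd : ∀ i, d (i, 0) + d (i, 1) = 1) (a : k)
    (P : Fin 6 × Fin 2 → k) :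
    eval P (monomial d a) =
      a * ∏ i, P (i, if i ∈ Finset.univ.filter (fun i => d (i, 0) = 1) then 0 else 1) := by
  rw [eval_monomial, Finsupp.prod_fintype _ _ (by simp), Fintype.prod_prod_type]
  congr 1
  refine Finset.prod_congr rfl fun i _ => ?_
  have h := hd i
  rw [Fin.prod_univ_two]
  by_cases h0 : d (i, 0) = 1
  · have h1 : d (i, 1) = 0 := by omega
    simp [h0, h1]
  · have h1 : d (i, 1) = 1 := by omega
    have h0' : d (i, 0) = 0 := by omega
    simp [h0', h1]

theorem prod_pt (S T : Finset (Fin 6)) :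
    ∏ i, pt k S (i, if i ∈ T then 0 else 1) = if T = S then 1 else 0 := by
  split_ifs with h
  · subst h
    refine Finset.prod_eq_one fun i _ => ?_
    by_cases hi : i ∈ T <;> simp [pt, hi]
  · obtain ⟨i, hi⟩ : ∃ i, ¬ (i ∈ T ↔ i ∈ S) := by
      by_contra! hc
      exact h (Finset.ext hc)
    refine Finset.prod_eq_zero (Finset.mem_univ i) ?_
    by_cases h1 : i ∈ T <;> by_cases h2 : i ∈ S <;> simp_all [pt]

/-- The multilinear expansion of a polynomial of multidegree `(1,…,1)`. -/
theorem eval_eq_sum {f : PtRing k 6}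
    (hf : f ∈ weightedHomogeneousSubmodule k (fun p : Fin 6 × Fin 2 => Finsupp.single p.1 1)
      (Finsupp.equivFunOnFinite.symm fun _ => 1)) (P : Fin 6 × Fin 2 → k) :
    eval P f = ∑ S, eval (pt k S) f * ∏ i, P (i, if i ∈ S then 0 else 1) := by
  have key : ∀ d ∈ f.support, ∀ i, d (i, 0) + d (i, 1) = 1 := by
    intro d hd i
    have h := (mem_weightedHomogeneousSubmodule _ _ _ _).1 hf (mem_support_iff.1 hd)
    have h2 := DFunLike.congr_fun h i
    rw [Finsupp.weight_apply, Finsupp.sum_fintype _ _ (by simp), Finsupp.finsetSum_apply,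
      Fintype.sum_prod_type, Finset.sum_eq_single i] at h2
    · simpa using h2
    · intro j _ hj
      simp [hj]
    · simp
  have hmon : ∀ d ∈ f.support, eval P (monomial d (coeff d f)) =
      ∑ S, eval (pt k S) (monomial d (coeff d f)) * ∏ i, P (i, if i ∈ S then 0 else 1) := by
    intro d hd
    have e := fun P => eval_monomial_eq d (key d hd) (coeff d f) P
    rw [e P]
    simp only [e, prod_pt]
    simp
  conv_lhs => rw [f.as_sum, map_sum, Finset.sum_congr rfl hmon, Finset.sum_comm]
  refine Finset.sum_congr rfl fun S _ => ?_
  rw [← Finset.sum_mul, ← map_sum, ← f.as_sum]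

theorem eval_act {f : PtRing k 6} (hf : f ∈ Rv k 6 fun _ => 1)
    (g : Matrix (Fin 2) (Fin 2) k) (hg : g.det = 1) (P : Fin 6 × Fin 2 → k) :
    eval (act g P) f = eval P f := by
  have h := (Submodule.mem_iInf _).1 (Submodule.mem_inf.1 hf).1 ⟨g, hg⟩
  have h' : subst k 6 g f = f := by simpa [sub_eq_zero] using h
  rw [← eval_subst, h']

theorem coef_eq_zero_of_card [CharZero k] {f : PtRing k 6} (hf : f ∈ Rv k 6 fun _ => 1)
    (S : Finset (Fin 6)) (hS : S.card ≠ 3) : eval (pt k S) f = 0 := by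
  have h := eval_act hf !![2, 0; 0, 2⁻¹] (by simp [Matrix.det_fin_two]) (pt k S)
  rw [eval_eq_sum (Submodule.mem_inf.1 hf).2] at h
  have hp : ∀ T : Finset (Fin 6), ∏ i, act !![2, 0; 0, 2⁻¹] (pt k S) (i, if i ∈ T then 0 else 1) =
      if T = S then 2 ^ S.card * 2⁻¹ ^ Sᶜ.card else 0 := by
    intro T
    have : ∀ i, act !![2, 0; 0, 2⁻¹] (pt k S) (i, if i ∈ T then 0 else 1) =
        (if i ∈ T then 2 else 2⁻¹) * pt k S (i, if i ∈ T then 0 else 1) := by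
      intro i
      by_cases hi : i ∈ T <;> simp [act, hi]
    rw [Finset.prod_congr rfl fun i _ => this i, Finset.prod_mul_distrib, prod_pt,
      Finset.prod_ite, Finset.prod_const, Finset.prod_const]
    split_ifs with hT
    · subst hT
      rw [mul_one, Finset.compl_eq_univ_sdiff, Finset.sdiff_eq_filter, Finset.filter_mem_eq_inter,
        Finset.univ_inter]
    · simp
  simp only [hp] at h
  simp only [mul_ite, mul_zero, Finset.sum_ite_eq', Finset.mem_univ, if_true] at h
  by_contra hc
  have h2 : (2 : k) ^ S.card = 2 ^ Sᶜ.card := by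
    have := mul_left_cancel₀ hc (h.trans (mul_one _).symm)
    rw [inv_pow] at this
    field_simp at this
    exact this
  have h3 : S.card = Sᶜ.card := Nat.pow_right_injective le_rfl (by exact_mod_cast h2)
  have h4 := S.card_compl_add_card
  rw [Fintype.card_fin] at h4
  omega

theorem sum_pair [CharZero k] {f : PtRing k 6} (hf : f ∈ Rv k 6 fun _ => 1)
    (T : Finset (Fin 6)) (hT : T.card = 2) :
    ∑ S with T ⊆ S ∧ S.card = 3, eval (pt k S) f = 0 := by
  -- The matrix fixes `(1,0)` and sends `(0,1)` to `(1,1)`.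
  have h := eval_act hf !![1, 0; 1, 1] (by simp [Matrix.det_fin_two]) (pt k T)
  rw [eval_eq_sum (Submodule.mem_inf.1 hf).2,
    coef_eq_zero_of_card hf T (by omega)] at h
  rw [← h, Finset.sum_filter]
  refine Finset.sum_congr rfl fun S _ => ?_
  by_cases hS : S.card = 3
  · by_cases hTS : T ⊆ S
    · rw [if_pos ⟨hTS, hS⟩, Finset.prod_eq_one, mul_one]
      intro i _
      by_cases hi : i ∈ S
      · by_cases hi' : i ∈ T <;> simp [act, pt, hi, hi']
      · have hi' : i ∉ T := fun h => hi (hTS h)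
        simp [act, pt, hi, hi']
    · rw [if_neg (by tauto)]
      obtain ⟨i, hi, hi'⟩ := Finset.not_subset.1 hTS
      rw [Finset.prod_eq_zero (Finset.mem_univ i), mul_zero]
      simp [act, pt, hi, hi']
  · rw [coef_eq_zero_of_card hf S hS]
    simp

theorem sum_four {c : Finset (Fin 6) → k}
    (h : ∀ T : Finset (Fin 6), T.card = 2 → ∑ S with T ⊆ S ∧ S.card = 3, c S = 0)
    {T A B C D : Finset (Fin 6)} (hT : T.card = 2)
    (hS : (Finset.univ.filter fun S => T ⊆ S ∧ S.card = 3) = {A, B, C, D} ∧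
      A ∉ ({B, C, D} : Finset (Finset (Fin 6))) ∧ B ∉ ({C, D} : Finset (Finset (Fin 6))) ∧ C ≠ D) :
    c A + (c B + (c C + c D)) = 0 := by
  obtain ⟨h1, h2, h3, h4⟩ := hS
  rw [← h T hT, h1, Finset.sum_insert h2, Finset.sum_insert h3, Finset.sum_pair h4]

/-- The 15 pair relations leave at most five degrees of freedom. -/
theorem all_zero [CharZero k] {c : Finset (Fin 6) → k}
    (h : ∀ T : Finset (Fin 6), T.card = 2 → ∑ S with T ⊆ S ∧ S.card = 3, c S = 0)
    (h1 : c {0, 1, 2} = 0) (h2 : c {0, 1, 3} = 0) (h3 : c {0, 1, 4} = 0) (h4 : c {0, 2, 3} = 0)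
    (h5 : c {0, 2, 4} = 0) (S : Finset (Fin 6)) (hS : S.card = 3) : c S = 0 := by
  have e01 := sum_four h (T := {0, 1}) (A := {0, 1, 2}) (B := {0, 1, 3})
    (C := {0, 1, 4}) (D := {0, 1, 5}) (by decide) (by decide)
  have e02 := sum_four h (T := {0, 2}) (A := {0, 1, 2}) (B := {0, 2, 3})
    (C := {0, 2, 4}) (D := {0, 2, 5}) (by decide) (by decide)
  have e03 := sum_four h (T := {0, 3}) (A := {0, 1, 3}) (B := {0, 2, 3})
    (C := {0, 3, 4}) (D := {0, 3, 5}) (by decide) (by decide)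
  have e04 := sum_four h (T := {0, 4}) (A := {0, 1, 4}) (B := {0, 2, 4})
    (C := {0, 3, 4}) (D := {0, 4, 5}) (by decide) (by decide)
  have e05 := sum_four h (T := {0, 5}) (A := {0, 1, 5}) (B := {0, 2, 5})
    (C := {0, 3, 5}) (D := {0, 4, 5}) (by decide) (by decide)
  have e12 := sum_four h (T := {1, 2}) (A := {0, 1, 2}) (B := {1, 2, 3})
    (C := {1, 2, 4}) (D := {1, 2, 5}) (by decide) (by decide)
  have e13 := sum_four h (T := {1, 3}) (A := {0, 1, 3}) (B := {1, 2, 3})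
    (C := {1, 3, 4}) (D := {1, 3, 5}) (by decide) (by decide)
  have e14 := sum_four h (T := {1, 4}) (A := {0, 1, 4}) (B := {1, 2, 4})
    (C := {1, 3, 4}) (D := {1, 4, 5}) (by decide) (by decide)
  have e15 := sum_four h (T := {1, 5}) (A := {0, 1, 5}) (B := {1, 2, 5})
    (C := {1, 3, 5}) (D := {1, 4, 5}) (by decide) (by decide)
  have e23 := sum_four h (T := {2, 3}) (A := {0, 2, 3}) (B := {1, 2, 3})
    (C := {2, 3, 4}) (D := {2, 3, 5}) (by decide) (by decide)
  have e24 := sum_four h (T := {2, 4}) (A := {0, 2, 4}) (B := {1, 2, 4})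
    (C := {2, 3, 4}) (D := {2, 4, 5}) (by decide) (by decide)
  have e25 := sum_four h (T := {2, 5}) (A := {0, 2, 5}) (B := {1, 2, 5})
    (C := {2, 3, 5}) (D := {2, 4, 5}) (by decide) (by decide)
  have e34 := sum_four h (T := {3, 4}) (A := {0, 3, 4}) (B := {1, 3, 4})
    (C := {2, 3, 4}) (D := {3, 4, 5}) (by decide) (by decide)
  have e35 := sum_four h (T := {3, 5}) (A := {0, 3, 5}) (B := {1, 3, 5})
    (C := {2, 3, 5}) (D := {3, 4, 5}) (by decide) (by decide)
  have e45 := sum_four h (T := {4, 5}) (A := {0, 4, 5}) (B := {1, 4, 5})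
    (C := {2, 4, 5}) (D := {3, 4, 5}) (by decide) (by decide)
  have hmem : ∀ S : Finset (Fin 6), S.card = 3 → S ∈ ({
        {0, 1, 2}, {0, 1, 3}, {0, 1, 4}, {0, 1, 5}, {0, 2, 3},
        {0, 2, 4}, {0, 2, 5}, {0, 3, 4}, {0, 3, 5}, {0, 4, 5},
        {1, 2, 3}, {1, 2, 4}, {1, 2, 5}, {1, 3, 4}, {1, 3, 5},
        {1, 4, 5}, {2, 3, 4}, {2, 3, 5}, {2, 4, 5}, {3, 4, 5}} :
        Finset (Finset (Fin 6))) := by decide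
  have hS' := hmem S hS
  clear h hmem hS
  simp only [Finset.mem_insert, Finset.mem_singleton] at hS'
  rcases hS' with h | h | h | h | h | h | h | h | h | h | h | h | h | h | h | h | h | h | h | h <;>
    rw [h] <;> clear h <;> grind

theorem subst_bracket (g : Matrix (Fin 2) (Fin 2) k) (hg : g.det = 1) (a b : Fin 6) :
    subst k 6 g (bracket k 6 a b) = bracket k 6 a b := by
  have h : (C (g 0 0) * C (g 1 1) - C (g 0 1) * C (g 1 0) : PtRing k 6) = 1 := by
    rw [← C_mul, ← C_mul, ← C_sub, ← Matrix.det_fin_two, hg, C_1]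
  simp only [bracket, map_sub, map_mul, subst, aeval_X, if_true, one_ne_zero, if_false]
  linear_combination (X (a, 0) * X (b, 1) - X (b, 0) * X (a, 1)) * h

theorem bracket_homogeneous_s10 (a b : Fin 6) :
    IsWeightedHomogeneous (fun p : Fin 6 × Fin 2 => (Finsupp.single p.1 1 : Fin 6 →₀ ℕ))
      (bracket k 6 a b) (Finsupp.single a 1 + Finsupp.single b 1) := by
  have hX := fun p : Fin 6 × Fin 2 => isWeightedHomogeneous_X k
    (fun p : Fin 6 × Fin 2 => (Finsupp.single p.1 1 : Fin 6 →₀ ℕ)) p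
  refine Submodule.sub_mem (weightedHomogeneousSubmodule k _ _) ?_ ?_
  · exact (hX (a, 0)).mul (hX (b, 1))
  · have h := (hX (b, 0)).mul (hX (a, 1))
    rwa [add_comm] at h

/-- The graph monomial of a perfect matching is an invariant of multidegree `(1,…,1)`. -/
theorem matching_mem (a b c d e f : Fin 6)
    (h : ∀ i, (if a = i then 1 else 0) + (if b = i then 1 else 0) +
      ((if c = i then 1 else 0) + (if d = i then 1 else 0)) +
      ((if e = i then 1 else 0) + (if f = i then 1 else 0)) = 1) :
    bracket k 6 a b * bracket k 6 c d * bracket k 6 e f ∈ Rv k 6 fun _ => 1 := by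
  refine Submodule.mem_inf.2 ⟨(Submodule.mem_iInf _).2 fun g => ?_, ?_⟩
  · simp [subst_bracket _ g.det_coe]
  · have hw := ((bracket_homogeneous_s10 (k := k) a b).mul (bracket_homogeneous_s10 c d)).mul
      (bracket_homogeneous_s10 e f)
    convert hw using 1
    rw [mem_weightedHomogeneousSubmodule]
    congr! 1
    ext i
    simpa [Finsupp.single_apply] using (h i).symm

/-- The five coefficients of an invariant indexed by the sets of opening points of the
noncrossing perfect matchings. -/
noncomputable def coefMap (k : Type) [Field k] : ↥(Rv k 6 fun _ => 1) →ₗ[k] (Fin 5 → k) :=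
  LinearMap.pi fun j =>
    (aeval (pt k ((![{0, 1, 2}, {0, 1, 3}, {0, 1, 4}, {0, 2, 3}, {0, 2, 4}] :
      Fin 5 → Finset (Fin 6)) j))).toLinearMap ∘ₗ (Rv k 6 fun _ => 1).subtype

theorem coefMap_injective [CharZero k] : Function.Injective (coefMap k) := by
  rw [← LinearMap.ker_eq_bot, LinearMap.ker_eq_bot']
  rintro ⟨f, hf⟩ h
  have hj := fun j => congrFun h j
  simp only [coefMap, LinearMap.pi_apply, LinearMap.comp_apply, AlgHom.toLinearMap_apply,
    Submodule.subtype_apply, Pi.zero_apply] at hj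
  have hz : ∀ S, eval (pt k S) f = 0 := by
    intro S
    by_cases hS : S.card = 3
    · exact all_zero (c := fun S => eval (pt k S) f) (sum_pair hf)
        (hj 0) (hj 1) (hj 2) (hj 3) (hj 4) S hS
    · exact coef_eq_zero_of_card hf S hS
  refine Subtype.ext (MvPolynomial.funext fun P => ?_)
  rw [eval_eq_sum (Submodule.mem_inf.1 hf).2]
  simp [hz]

theorem coefMap_surjective : Function.Surjective (coefMap k) := by
  intro v
  -- The coefficients come from solving the unitriangular system by forward substitution.
  refine ⟨v 0 • ⟨_, matching_mem 2 3 1 4 0 5 (by decide)⟩ +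
    (v 0 + v 1) • ⟨_, matching_mem 1 2 3 4 0 5 (by decide)⟩ +
    (v 0 + v 1 + v 2) • ⟨_, matching_mem 1 2 0 3 4 5 (by decide)⟩ +
    (v 0 + v 1 + v 3) • ⟨_, matching_mem 0 1 2 5 3 4 (by decide)⟩ +
    (2 * v 0 + v 1 + v 2 + v 3 + v 4) • ⟨_, matching_mem 0 1 2 3 4 5 (by decide)⟩, ?_⟩
  ext j
  fin_cases j <;> simp [coefMap, bracket, pt] <;> ring

/-- For six points, the space of invariants of multidegree `(1,1,1,1,1,1)` has dimension 5. -/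
theorem stmt10 (k : Type) [Field k] [CharZero k] :
    Module.finrank k ↥(Rv k 6 fun _ => 1) = 5 := by
  rw [(LinearEquiv.ofBijective (coefMap k) ⟨coefMap_injective, coefMap_surjective⟩).finrank_eq]
  simp
end

section
/- (The Segre cubic exception for six points.) Let k be a field of characteristic 0 and n = 6. Let P = k[t_M] be the polynomial ring with one variable t_M for each of the 15 perfect matchings M on {1,…,6}, and let φ : P → A be the k-algebra homomorphism sending t_M to the graph monomial m_M. Then the ideal ker φ is generated by its homogeneous elements of degree at most 3, but it is NOT generated by its homogeneous elements of degree at most 2: a cubic relation (the Segre cubic relation) is a necessary generator. -/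
/-!
The non-crossing matchings of a hexagon give five monomials `z₀, …, z₄`, and the Plücker relations
write each of the fifteen matching monomials as a sum of some of these
(`exists_graphMonomial_eq_sum`). Modulo linear relations the problem is therefore to find the
kernel of `psi : k[z₀, …, z₄] → k[x, y]`. Writing the product of the three non-crossing matchings
with a long diagonal as the product of the two side matchings and the matching formed by the long
diagonals gives the Segre cubic `z₀z₃z₄ = z₁z₂(z₀ + z₁ + z₂ + z₃ + z₄)`.

This cubic generates the kernel of `psi` (`segre_dvd_of_psi_eq_zero`). It has degree one in `z₀`
with coprime coefficients, so it is prime, and any relation `G`, multiplied by a power of the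
coefficient of `z₀`, is congruent modulo the cubic to a relation `r` in `z₁, …, z₄` only. There is
an explicit configuration of six points over the field `k(w₀, …, w₃)` at which `z₁, …, z₄` take
the values `w₀, …, w₃` (`genericConfig`); hence `r = 0`, and the cubic divides `G`.

Consequently the linear relations and the cubic generate the ideal. A relation of degree at most
`2` reduces to a multiple of the cubic in five variables, hence to zero, so the ideal generated by
those relations does not contain the cubic.
-/

open MvPolynomial

/-- The type of perfect matchings on `{1,…,n}`. -/
def Matching (n : ℕ) : Type :=
  {M : Multiset (Fin n × Fin n) // IsPerfectMatching n M}

/-- The `k`-algebra homomorphism `φ : k[t_M] → A` sending the variable `t_M` attached to a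
perfect matching `M` to its graph monomial `m_M`. -/
noncomputable def phi (k : Type) [CommRing k] (n : ℕ) :
    MvPolynomial (Matching n) k →ₐ[k] PtRing k n :=
  aeval fun M => graphMonomial k n M.1


/-! ### Enumeration of the matchings -/

/-- The five non-crossing perfect matchings of the hexagon with vertices `0, …, 5`: the one with
the long diagonal `03`, the two consisting of sides, and those with the long diagonals
`14` and `25`. -/
def base : Fin 5 → Multiset (Fin 6 × Fin 6) :=
  ![{(0, 3), (1, 2), (4, 5)}, {(0, 1), (2, 3), (4, 5)}, {(0, 5), (1, 2), (3, 4)},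
    {(0, 5), (1, 4), (2, 3)}, {(0, 1), (2, 5), (3, 4)}]

lemma base_isPerfectMatching (i : Fin 5) : IsPerfectMatching 6 (base i) := by
  unfold IsPerfectMatching
  revert i
  decide

/-- The non-crossing matching `base i` as an index of a variable of `k[t_M]`. -/
def baseMatching (i : Fin 5) : Matching 6 := ⟨base i, base_isPerfectMatching i⟩

/-- All fifteen perfect matchings on six vertices. -/
def allMatchings : List (Multiset (Fin 6 × Fin 6)) :=
  [{(0, 1), (2, 3), (4, 5)}, {(0, 1), (2, 4), (3, 5)}, {(0, 1), (2, 5), (3, 4)},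
   {(0, 2), (1, 3), (4, 5)}, {(0, 2), (1, 4), (3, 5)}, {(0, 2), (1, 5), (3, 4)},
   {(0, 3), (1, 2), (4, 5)}, {(0, 3), (1, 4), (2, 5)}, {(0, 3), (1, 5), (2, 4)},
   {(0, 4), (1, 2), (3, 5)}, {(0, 4), (1, 3), (2, 5)}, {(0, 4), (1, 5), (2, 3)},
   {(0, 5), (1, 2), (3, 4)}, {(0, 5), (1, 3), (2, 4)}, {(0, 5), (1, 4), (2, 3)}]

/-- The fifteen pairs `(a, b)` with `a < b`. -/
def edges : List (Fin 6 × Fin 6) :=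
  [(0, 1), (0, 2), (0, 3), (0, 4), (0, 5), (1, 2), (1, 3), (1, 4), (1, 5), (2, 3), (2, 4), (2, 5),
    (3, 4), (3, 5), (4, 5)]

lemma mem_edges : ∀ e : Fin 6 × Fin 6, e.1 < e.2 → e ∈ edges := by
  decide +kernel

lemma mem_allMatchings_of_list :
    ∀ l ∈ edges.sublistsLen 3,
      (∀ i : Fin 6, (l.map Prod.fst).count i + (l.map Prod.snd).count i = 1) →
        (l : Multiset (Fin 6 × Fin 6)) ∈ allMatchings := by
  decide +kernel

lemma mem_allMatchings {M : Multiset (Fin 6 × Fin 6)} (hM : IsPerfectMatching 6 M) :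
    M ∈ allMatchings := by
  obtain ⟨hlt, hval⟩ := hM
  have hnodup : M.Nodup := by
    rw [Multiset.nodup_iff_count_le_one]
    intro e
    have h1 : M.count e ≤ (M.map Prod.fst).count e.1 := by
      rw [Multiset.count_map, Multiset.count, Multiset.countP_eq_card_filter]
      exact Multiset.card_le_card (Multiset.monotone_filter_right M fun x hx => by rw [hx])
    have h2 := hval e.1
    omega
  have hcard : M.card = 3 := by
    have h1 : ∑ i : Fin 6, (M.map Prod.fst).count i = (M.map Prod.fst).card :=
      Multiset.sum_count_eq_card (by simp)
    have h2 : ∑ i : Fin 6, (M.map Prod.snd).count i = (M.map Prod.snd).card :=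
      Multiset.sum_count_eq_card (by simp)
    have h3 : ∑ i : Fin 6, ((M.map Prod.fst).count i + (M.map Prod.snd).count i) = 6 := by
      simp [hval]
    rw [Finset.sum_add_distrib, h1, h2] at h3
    simp only [Multiset.card_map] at h3
    omega
  have hmem : M ∈ Multiset.powersetCard 3 (edges : Multiset (Fin 6 × Fin 6)) :=
    Multiset.mem_powersetCard.2
      ⟨(Multiset.le_iff_subset hnodup).2 fun e he => mem_edges e (hlt e he), hcard⟩
  rw [Multiset.powersetCard_coe, Multiset.mem_coe, List.mem_map] at hmem
  obtain ⟨l, hl, rfl⟩ := hmem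
  exact mem_allMatchings_of_list l hl fun i => by simpa using hval i

/-- Straightening by the Plücker relations: each matching monomial is a sum of non-crossing
ones. -/
lemma exists_graphMonomial_eq_sum (k : Type) [CommRing k] {M : Multiset (Fin 6 × Fin 6)}
    (hM : IsPerfectMatching 6 M) :
    ∃ S : Finset (Fin 5), graphMonomial k 6 M = ∑ i ∈ S, graphMonomial k 6 (base i) := by
  have h := mem_allMatchings hM
  simp only [allMatchings, List.mem_cons, List.not_mem_nil, or_false] at h
  rcases h with rfl | rfl | rfl | rfl | rfl | rfl | rfl | rfl | rfl | rfl | rfl | rfl | rfl |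
    rfl | rfl
  · exact ⟨{1}, by simp [base]⟩
  · exact ⟨{1, 4}, by simp [graphMonomial, base, bracket]; ring⟩
  · exact ⟨{4}, by simp [base]⟩
  · exact ⟨{0, 1}, by simp [graphMonomial, base, bracket]; ring⟩
  · exact ⟨{0, 1, 2, 4}, by simp [graphMonomial, base, bracket]; ring⟩
  · exact ⟨{2, 4}, by simp [graphMonomial, base, bracket]; ring⟩
  · exact ⟨{0}, by simp [base]⟩
  · exact ⟨{0, 1, 2, 3, 4}, by simp [graphMonomial, base, bracket]; ring⟩
  · exact ⟨{1, 2, 3, 4}, by simp [graphMonomial, base, bracket]; ring⟩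
  · exact ⟨{0, 2}, by simp [graphMonomial, base, bracket]; ring⟩
  · exact ⟨{0, 1, 2, 3}, by simp [graphMonomial, base, bracket]; ring⟩
  · exact ⟨{1, 3}, by simp [graphMonomial, base, bracket]; ring⟩
  · exact ⟨{2}, by simp [base]⟩
  · exact ⟨{2, 3}, by simp [graphMonomial, base, bracket]; ring⟩
  · exact ⟨{3}, by simp [base]⟩

/-! ### The Segre cubic -/

/-- The coefficient of `z₀` in the Segre cubic. -/
noncomputable def segreLead (k : Type) [CommRing k] : MvPolynomial (Fin 5) k :=
  X 3 * X 4 - X 1 * X 2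

/-- The part of the Segre cubic not involving `z₀`, up to sign. -/
noncomputable def segreTail (k : Type) [CommRing k] : MvPolynomial (Fin 5) k :=
  X 1 * X 2 * (X 1 + X 2 + X 3 + X 4)

/-- The Segre cubic `z₀z₃z₄ - z₁z₂(z₀ + z₁ + z₂ + z₃ + z₄)`, arranged as a polynomial of degree
one in `z₀`. -/
noncomputable def segre (k : Type) [CommRing k] : MvPolynomial (Fin 5) k :=
  segreLead k * X 0 + -segreTail k

lemma notMem_vars_of_mem_supported {k σ : Type} [CommRing k] {i : σ} {f : MvPolynomial σ k}
    (h : f ∈ supported k ({i}ᶜ : Set σ)) : i ∉ f.vars := by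
  intro hi
  exact mem_supported.1 h hi rfl

lemma X_mem_supported_compl (k : Type) [CommRing k] [Nontrivial k] {σ : Type} {i j : σ}
    (h : j ≠ i) : (X j : MvPolynomial σ k) ∈ supported k ({i}ᶜ : Set σ) :=
  X_mem_supported.2 h

/-- A polynomial with a zero off the zero set of `g` does not divide `g`. -/
lemma not_dvd_of_eval {k σ : Type} [CommRing k] {f g : MvPolynomial σ k} (v : σ → k)
    (hf : eval v f = 0) (hg : eval v g ≠ 0) : ¬ f ∣ g := by
  rintro ⟨q, rfl⟩
  exact hg (by rw [map_mul, hf, zero_mul])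

section Field

variable (k : Type) [Field k]

lemma segreLead_ne_zero : segreLead k ≠ 0 := by
  intro h
  have := congrArg (eval (![0, 0, 0, 1, 1] : Fin 5 → k)) h
  simp [segreLead] at this

lemma irreducible_segreLead : Irreducible (segreLead k) := by
  have hX : Irreducible (X 4 : MvPolynomial (Fin 5) k) := (X_prime).irreducible
  have h : segreLead k = X 4 * X 3 + -(X 1 * X 2) := by unfold segreLead; ring
  rw [h]
  refine irreducible_mul_X_add _ _ _ (X_ne_zero _) ?_ ?_ ?_
  · exact notMem_vars_of_mem_supported (X_mem_supported_compl k (by decide))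
  · exact notMem_vars_of_mem_supported (neg_mem (mul_mem
      (X_mem_supported_compl k (by decide)) (X_mem_supported_compl k (by decide))))
  · rw [hX.isRelPrime_iff_not_dvd]
    exact not_dvd_of_eval ![0, 1, 1, 0, 0] (by simp) (by simp)

lemma prime_segre [CharZero k] : Prime (segre k) := by
  have hX (j : Fin 5) (h : j ≠ 0) := X_mem_supported_compl k h
  refine Irreducible.prime (irreducible_mul_X_add _ _ _ (segreLead_ne_zero k) ?_ ?_ ?_)
  · exact notMem_vars_of_mem_supported (sub_mem (mul_mem (hX 3 (by decide)) (hX 4 (by decide)))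
      (mul_mem (hX 1 (by decide)) (hX 2 (by decide))))
  · exact notMem_vars_of_mem_supported (neg_mem (mul_mem (mul_mem (hX 1 (by decide))
      (hX 2 (by decide))) (add_mem (add_mem (add_mem (hX 1 (by decide)) (hX 2 (by decide)))
      (hX 3 (by decide))) (hX 4 (by decide)))))
  · rw [(irreducible_segreLead k).isRelPrime_iff_not_dvd]
    refine not_dvd_of_eval ![0, 1, 1, 1, 1] (by simp [segreLead]) ?_
    simp [segreTail]
    norm_num

lemma segre_isHomogeneous : (segre k).IsHomogeneous 3 := by
  have hX (j : Fin 5) : (X j : MvPolynomial (Fin 5) k).IsHomogeneous 1 := isHomogeneous_X k j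
  have h2 (i j : Fin 5) : (X i * X j : MvPolynomial (Fin 5) k).IsHomogeneous 2 :=
    (hX i).mul (hX j)
  exact ((((h2 3 4).sub (h2 1 2)).mul (hX 0))).add
    ((h2 1 2).mul ((((hX 1).add (hX 2)).add (hX 3)).add (hX 4))).neg

lemma not_segre_dvd_segreLead : ¬ segre k ∣ segreLead k :=
  not_dvd_of_eval ![0, 0, 0, 1, 1] (by simp [segre, segreLead, segreTail]) (by simp [segreLead])

/-- Pseudo-division by the Segre cubic: after multiplication by a power of its leading
coefficient, every polynomial is congruent to one not involving `z₀`. -/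
lemma exists_pseudo_remainder (G : MvPolynomial (Fin 5) k) :
    ∃ (N : ℕ) (r : MvPolynomial (Fin 4) k),
      segre k ∣ segreLead k ^ N * G - rename Fin.succ r := by
  have hlead : segreLead k = rename Fin.succ (X 2 * X 3 - X 0 * X 1 : MvPolynomial (Fin 4) k) := by
    simp [segreLead]
  have htail : segreTail k = rename Fin.succ
      (X 0 * X 1 * (X 0 + X 1 + X 2 + X 3) : MvPolynomial (Fin 4) k) := by
    simp [segreTail]
  induction G using MvPolynomial.induction_on with
  | C c => exact ⟨0, C c, by simp⟩
  | add p q hp hq =>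
    obtain ⟨N, r, f, hf⟩ := hp
    obtain ⟨M, s, g, hg⟩ := hq
    refine ⟨N + M, (X 2 * X 3 - X 0 * X 1) ^ M * r + (X 2 * X 3 - X 0 * X 1) ^ N * s,
      segreLead k ^ M * f + segreLead k ^ N * g, ?_⟩
    simp only [map_add, map_mul, map_pow, ← hlead]
    linear_combination segreLead k ^ M * hf + segreLead k ^ N * hg
  | mul_X p i hp =>
    obtain ⟨N, r, f, hf⟩ := hp
    refine Fin.cases ?_ (fun j => ?_) i
    · refine ⟨N + 1, X 0 * X 1 * (X 0 + X 1 + X 2 + X 3) * r,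
        segreLead k * X 0 * f + rename Fin.succ r, ?_⟩
      rw [map_mul, ← htail]
      rw [segre] at hf ⊢
      linear_combination segreLead k * X 0 * hf
    · refine ⟨N, r * X j, f * X j.succ, ?_⟩
      rw [map_mul, rename_X]
      linear_combination X j.succ * hf

/-! ### The kernel on five variables -/

/-- The restriction of `phi` to the five non-crossing matchings. -/
noncomputable def psi : MvPolynomial (Fin 5) k →ₐ[k] PtRing k 6 :=
  aeval fun i => graphMonomial k 6 (base i)

lemma psi_segre : psi k (segre k) = 0 := by
  simp [psi, segre, segreLead, segreTail, graphMonomial, base, bracket]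
  ring

/-- Six points of the plane over the function field of `k[w₀, …, w₃]` at which the matching
monomials of `base 1, …, base 4` take the values `w₀, …, w₃`. They invert the rational
parametrisation of the Segre cubic by the points `(0, l), (1, p), (1, 0), (1, u), (1, u + 1),
(1, q)`. -/
noncomputable def genericConfig :
    Fin 6 × Fin 2 → FractionRing (MvPolynomial (Fin 4) k) :=
  let w (i : Fin 4) : FractionRing (MvPolynomial (Fin 4) k) :=
    algebraMap (MvPolynomial (Fin 4) k) _ (X i)
  let u := (w 0 + w 2) / (w 1 + w 3)
  let l := (w 0 * w 1 - w 2 * w 3) * (w 1 + w 3) / ((w 0 + w 2) * (w 0 + w 1 + w 2 + w 3))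
  fun p => (![![0, l], ![1, w 1 / l], ![1, 0], ![1, u], ![1, u + 1], ![1, -w 3 / l]] :
    Fin 6 → Fin 2 → _) p.1 p.2

/-- Evaluation of `k[x, y]` at the generic configuration. -/
noncomputable def theta : PtRing k 6 →ₐ[k] FractionRing (MvPolynomial (Fin 4) k) :=
  aeval (genericConfig k)

lemma algebraMap_ne_zero_of_eval {f : MvPolynomial (Fin 4) k} (v : Fin 4 → k)
    (h : eval v f ≠ 0) : algebraMap _ (FractionRing (MvPolynomial (Fin 4) k)) f ≠ 0 := by
  rw [Ne, FaithfulSMul.algebraMap_eq_zero_iff]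
  rintro rfl
  simp at h

lemma theta_psi_X_succ (j : Fin 4) :
    theta k (psi k (X j.succ)) = algebraMap _ _ (X j : MvPolynomial (Fin 4) k) := by
  have h1 := algebraMap_ne_zero_of_eval k (f := X 1 + X 3) ![0, 1, 0, 0] (by simp)
  have h2 := algebraMap_ne_zero_of_eval k (f := X 0 + X 2) ![1, 0, 0, 0] (by simp)
  have h3 := algebraMap_ne_zero_of_eval k (f := X 0 + X 1 + X 2 + X 3) ![1, 0, 0, 0] (by simp)
  have h4 := algebraMap_ne_zero_of_eval k (f := X 0 * X 1 - X 2 * X 3) ![1, 1, 0, 0] (by simp)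
  simp only [map_add, map_sub, map_mul] at h1 h2 h3 h4
  fin_cases j <;>
    simp [psi, theta, base, graphMonomial, bracket, genericConfig] <;>
    field_simp <;> ring

lemma theta_psi_rename (r : MvPolynomial (Fin 4) k) :
    theta k (psi k (rename Fin.succ r)) = algebraMap _ _ r := by
  have h : ((theta k).comp (psi k)).comp (rename Fin.succ) =
      IsScalarTower.toAlgHom k (MvPolynomial (Fin 4) k) _ := by
    ext j
    simpa using theta_psi_X_succ k j
  exact DFunLike.congr_fun h r

/-- The relations among the non-crossing matching monomials form the principal ideal generated by
the Segre cubic. -/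
lemma segre_dvd_of_psi_eq_zero [CharZero k] {G : MvPolynomial (Fin 5) k} (hG : psi k G = 0) :
    segre k ∣ G := by
  obtain ⟨N, r, q, hq⟩ := exists_pseudo_remainder k G
  have hr : r = 0 := by
    have h := congrArg (fun f => theta k (psi k f)) hq
    simp only [map_sub, map_mul, hG, psi_segre, mul_zero, zero_mul, zero_sub, map_zero,
      map_neg, neg_eq_zero, theta_psi_rename] at h
    rwa [FaithfulSMul.algebraMap_eq_zero_iff] at h
  have hdvd : segre k ∣ segreLead k ^ N * G := ⟨q, by simpa [hr] using hq⟩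
  refine ((prime_segre k).dvd_or_dvd hdvd).resolve_left fun h => ?_
  exact not_segre_dvd_segreLead k ((prime_segre k).dvd_of_dvd_pow h)

lemma eq_zero_of_psi_eq_zero [CharZero k] {G : MvPolynomial (Fin 5) k} (hG : psi k G = 0)
    {d : ℕ} (hd : d ≤ 2) (hhom : G.IsHomogeneous d) : G = 0 := by
  obtain ⟨q, rfl⟩ := segre_dvd_of_psi_eq_zero k hG
  by_contra hne
  have h0 := left_ne_zero_of_mul hne
  have h := hhom.totalDegree hne
  rw [totalDegree_mul_of_isDomain h0 (right_ne_zero_of_mul hne),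
    (segre_isHomogeneous k).totalDegree h0] at h
  omega

/-! ### Lifting to fifteen variables -/

/-- The inclusion of `k[z₀, …, z₄]` into `k[t_M]` as the variables of the non-crossing
matchings. -/
noncomputable def liftBase : MvPolynomial (Fin 5) k →ₐ[k] MvPolynomial (Matching 6) k :=
  aeval fun i => X (baseMatching i)

lemma phi_liftBase (G : MvPolynomial (Fin 5) k) : phi k 6 (liftBase k G) = psi k G := by
  have h : (phi k 6).comp (liftBase k) = psi k := by
    ext1 i
    rw [AlgHom.comp_apply, liftBase, aeval_X, phi, aeval_X, psi, aeval_X, baseMatching]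
  exact DFunLike.congr_fun h G

lemma liftBase_isHomogeneous {G : MvPolynomial (Fin 5) k} {d : ℕ} (h : G.IsHomogeneous d) :
    (liftBase k G).IsHomogeneous d := by
  have := h.aeval (fun i => X (baseMatching i)) (fun i => isHomogeneous_X k _)
  rwa [one_mul] at this

/-- A straightening map `k[t_M] → k[z₀, …, z₄]`: it is graded and compatible with the maps
to `k[x, y]`. -/
lemma exists_straightening :
    ∃ L : MvPolynomial (Matching 6) k →ₐ[k] MvPolynomial (Fin 5) k,
      (∀ M, (L (X M)).IsHomogeneous 1) ∧ ∀ f, psi k (L f) = phi k 6 f := by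
  choose S hS using fun M : Matching 6 => exists_graphMonomial_eq_sum k M.2
  refine ⟨aeval fun M => ∑ i ∈ S M, X i, fun M => ?_, fun f => ?_⟩
  · rw [aeval_X]
    exact IsHomogeneous.sum _ _ _ fun i _ => isHomogeneous_X k i
  · have h : (psi k).comp (aeval fun M => ∑ i ∈ S M, X i) = phi k 6 := by
      ext1 M
      simp [psi, phi, hS]
    exact DFunLike.congr_fun h f

end Field

/-- The Segre cubic exception for six points: the ideal of relations is generated by its
homogeneous elements of degree at most 3, but not by those of degree at most 2. -/
theorem stmt14 (k : Type) [Field k] [CharZero k] :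
    RingHom.ker (phi k 6) = Ideal.span
      {f : MvPolynomial (Matching 6) k |
        f ∈ RingHom.ker (phi k 6) ∧ ∃ d ≤ 3, f.IsHomogeneous d} ∧
    RingHom.ker (phi k 6) ≠ Ideal.span
      {f : MvPolynomial (Matching 6) k |
        f ∈ RingHom.ker (phi k 6) ∧ ∃ d ≤ 2, f.IsHomogeneous d} := by
  obtain ⟨L, hLhom, hL⟩ := exists_straightening k
  have hLhom' {f : MvPolynomial (Matching 6) k} {d : ℕ} (h : f.IsHomogeneous d) :
      (L f).IsHomogeneous d := by
    have := h.aeval (fun M => L (X M)) hLhom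
    rw [one_mul] at this
    rwa [aeval_unique L]
  have hsegre : liftBase k (segre k) ∈ RingHom.ker (phi k 6) := by
    rw [RingHom.mem_ker, phi_liftBase, psi_segre]
  constructor
  · apply le_antisymm
    · set I := Ideal.span {f : MvPolynomial (Matching 6) k |
        f ∈ RingHom.ker (phi k 6) ∧ ∃ d ≤ 3, f.IsHomogeneous d} with hI
      intro f hf
      -- Modulo the linear relations `t_M - liftBase (L t_M)`, every `g` agrees with `liftBase (L g)`.
      have hlin (g : MvPolynomial (Matching 6) k) : g - liftBase k (L g) ∈ I := by
        have h : (Ideal.Quotient.mkₐ k I).comp ((liftBase k).comp L) = Ideal.Quotient.mkₐ k I := by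
          ext1 M
          have hM : X M - liftBase k (L (X M)) ∈ I := by
            refine Ideal.subset_span ⟨?_, 1, by norm_num,
              (isHomogeneous_X k M).sub (liftBase_isHomogeneous k (hLhom M))⟩
            rw [RingHom.mem_ker, map_sub, phi_liftBase, hL, sub_self]
          exact (Ideal.Quotient.eq.2 hM).symm
        exact Ideal.Quotient.eq.1 (DFunLike.congr_fun h g).symm
      obtain ⟨q, hq⟩ := segre_dvd_of_psi_eq_zero k (G := L f) (by rw [hL]; exact hf)
      have hmem : liftBase k (L f) ∈ I := by
        rw [hq, map_mul]
        exact I.mul_mem_right _ (Ideal.subset_span ⟨hsegre, 3, le_rfl,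
          liftBase_isHomogeneous k (segre_isHomogeneous k)⟩)
      simpa using I.add_mem (hlin f) hmem
    · exact Ideal.span_le.2 fun f hf => hf.1
  · intro heq
    have hle : RingHom.ker (phi k 6) ≤ RingHom.ker L := by
      rw [heq, Ideal.span_le]
      rintro f ⟨hf, d, hd, hhom⟩
      exact eq_zero_of_psi_eq_zero k (by rw [hL]; exact hf) hd (hLhom' hhom)
    -- `L` retracts `liftBase`, because there are no linear relations among non-crossing matchings.
    have hretract : L.comp (liftBase k) = AlgHom.id k _ := by
      ext1 i
      refine sub_eq_zero.1 (eq_zero_of_psi_eq_zero k ?_ one_le_two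
        ((hLhom' (liftBase_isHomogeneous k (isHomogeneous_X k i))).sub (isHomogeneous_X k i)))
      rw [map_sub, AlgHom.comp_apply, hL, phi_liftBase, AlgHom.id_apply, sub_self]
    have h0 : L (liftBase k (segre k)) = 0 := hle hsegre
    exact (prime_segre k).ne_zero ((DFunLike.congr_fun hretract (segre k)).symm.trans h0)
end
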